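/- Let f=(m,n,k) be an integer binary quadratic form with discriminant Δ=k²−4mn>0 not a perfect square. The period Γ(f) is of even length and neither palindromic nor bipalindromic if and only if the class of f is asymmetric, i.e., f is SL(2,ℤ)-equivalent to none of its conjugate (m,n,−k), its adjoint (−n,−m,k) and its antipodal (−n,−m,−k). -/

import Mathlib

/-- Iterates of the Gauss map starting from `ξ`. -/
noncomputable def gaussIter (ξ : ℝ) : ℕ → ℝ
  | 0 => ξ
  | n + 1 => 1 / (gaussIter ξ n - (⌊gaussIter ξ n⌋ : ℝ))

/-- The `n`-th partial quotient of the regular continued fraction expansion of `ξ`. -/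
noncomputable def cfTerm (ξ : ℝ) (n : ℕ) : ℤ := ⌊gaussIter ξ n⌋

/-- The continued fraction expansion of `ξ` is periodic with period length `P` from index `N`. -/
def IsEventuallyPeriodicCF (ξ : ℝ) (N P : ℕ) : Prop :=
  1 ≤ P ∧ ∀ j : ℕ, cfTerm ξ (N + j + P) = cfTerm ξ (N + j)

/-- `s` is the (minimal) period of the eventually periodic regular continued fraction
expansion of `ξ`; it is well defined up to cyclic permutation. -/
def IsCFPeriod (s : List ℤ) (ξ : ℝ) : Prop :=
  s ≠ [] ∧
  (∃ N : ℕ, ∀ j : ℕ, cfTerm ξ (N + j) = s.getD (j % s.length) 0) ∧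
  (∀ P : ℕ, 1 ≤ P → (∃ N : ℕ, IsEventuallyPeriodicCF ξ N P) → s.length ≤ P)

/-- The value of the binary quadratic form `f = (m, n, k)`, i.e. `m*x^2 + n*y^2 + k*x*y`. -/
def qval (f : ℤ × ℤ × ℤ) (x y : ℤ) : ℤ := f.1 * x ^ 2 + f.2.1 * y ^ 2 + f.2.2 * x * y

/-- The discriminant `k^2 - 4*m*n` of the form `f = (m, n, k)`. -/
def formDisc (f : ℤ × ℤ × ℤ) : ℤ := f.2.2 ^ 2 - 4 * f.1 * f.2.1

/-- `SL(2,ℤ)`-equivalence of binary quadratic forms. -/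
def SLEquiv (f g : ℤ × ℤ × ℤ) : Prop :=
  ∃ a b c d : ℤ, a * d - b * c = 1 ∧
    ∀ x y : ℤ, qval g x y = qval f (a * x + b * y) (c * x + d * y)

/-- The root with the plus sign of `m*ξ^2 + k*ξ + n = 0`, for `f = (m, n, k)`. -/
noncomputable def xiPlus (f : ℤ × ℤ × ℤ) : ℝ :=
  (-(f.2.2 : ℝ) + Real.sqrt ((formDisc f : ℤ) : ℝ)) / (2 * (f.1 : ℝ))

/-- The root with the minus sign of `m*ξ^2 + k*ξ + n = 0`, for `f = (m, n, k)`. -/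
noncomputable def xiMinus (f : ℤ × ℤ × ℤ) : ℝ :=
  (-(f.2.2 : ℝ) - Real.sqrt ((formDisc f : ℤ) : ℝ)) / (2 * (f.1 : ℝ))

/-- The conjugate `(m, n, -k)` of the form `(m, n, k)`. -/
def conjF (f : ℤ × ℤ × ℤ) : ℤ × ℤ × ℤ := (f.1, f.2.1, -f.2.2)

/-- The adjoint `(-n, -m, k)` of the form `(m, n, k)`. -/
def adjF (f : ℤ × ℤ × ℤ) : ℤ × ℤ × ℤ := (-f.2.1, -f.1, f.2.2)

/-- The antipodal `(-n, -m, -k)` of the form `(m, n, k)`. -/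
def antipF (f : ℤ × ℤ × ℤ) : ℤ × ℤ × ℤ := (-f.2.1, -f.1, -f.2.2)

/-- A form `(m, n, k)` is primitive if `gcd(m, n, k) = 1`. -/
def IsPrimitiveForm (f : ℤ × ℤ × ℤ) : Prop := Int.gcd f.1 (Int.gcd f.2.1 f.2.2) = 1

/-- A finite sequence is palindromic if some cyclic permutation of it equals its reversal. -/
def Palindromic (s : List ℤ) : Prop := ∃ t : List ℤ, List.IsRotated s t ∧ t.reverse = t

/-- A finite sequence is bipalindromic if some cyclic permutation of it is the concatenation
of two palindrome blocks each of odd length. -/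
def Bipalindromic (s : List ℤ) : Prop :=
  ∃ u v : List ℤ, List.IsRotated s (u ++ v) ∧ Odd u.length ∧ Odd v.length ∧
    u.reverse = u ∧ v.reverse = v

/-! ### Basic facts on the Gauss map -/

theorem gi_zero (x : ℝ) : gaussIter x 0 = x := rfl

theorem gi_succ (x : ℝ) (n : ℕ) :
    gaussIter x (n + 1) = 1 / (gaussIter x n - (⌊gaussIter x n⌋ : ℝ)) := rfl

theorem gi_add (x : ℝ) (n m : ℕ) : gaussIter x (n + m) = gaussIter (gaussIter x n) m := by
  induction m with
  | zero => rfl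
  | succ m ih => rw [← Nat.add_assoc, gi_succ, gi_succ, ih]

theorem gi_one (x : ℝ) : gaussIter x 1 = 1 / (x - (⌊x⌋ : ℝ)) := rfl

theorem cf_shift (x : ℝ) (n j : ℕ) : cfTerm (gaussIter x n) j = cfTerm x (n + j) := by
  unfold cfTerm; rw [gi_add]

theorem irr_one_div {x : ℝ} (h : Irrational x) : Irrational (1 / x) := by
  rw [one_div]; exact irrational_inv_iff.mpr h

theorem gi_irr {x : ℝ} (h : Irrational x) (n : ℕ) : Irrational (gaussIter x n) := by
  induction n with
  | zero => exact h
  | succ n ih => rw [gi_succ]; exact irr_one_div (ih.sub_intCast _)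

theorem fract_pos {x : ℝ} (h : Irrational x) : 0 < x - (⌊x⌋ : ℝ) := by
  have h1 := Int.floor_le x
  have h2 : x ≠ (⌊x⌋ : ℝ) := h.ne_int _
  have := lt_of_le_of_ne h1 h2.symm
  linarith

theorem gi_gt_one {x : ℝ} (h : Irrational x) (n : ℕ) : 1 < gaussIter x (n + 1) := by
  rw [gi_succ]
  have h1 := fract_pos (gi_irr h n)
  rw [lt_div_iff₀ h1]
  have := Int.lt_floor_add_one (gaussIter x n)
  linarith

theorem gi_recover {x : ℝ} (_h : Irrational x) : x = (⌊x⌋ : ℝ) + 1 / gaussIter x 1 := by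
  rw [gi_one, one_div_one_div]; ring

/-- If `x = a + 1/y` with `y > 1` then one Gauss step maps `x` to `y`. -/
theorem gi_of_eq {x y : ℝ} {a : ℤ} (hy : 1 < y) (hx : x = a + 1 / y) :
    ⌊x⌋ = a ∧ gaussIter x 1 = y := by
  have h0 : 0 < 1 / y := by positivity
  have h1 : 1 / y < 1 := by rw [div_lt_one (by linarith)]; exact hy
  have hf : ⌊x⌋ = a := by
    rw [Int.floor_eq_iff]; constructor <;> linarith
  refine ⟨hf, ?_⟩
  rw [gi_one, hf, hx]
  field_simp
  ring

theorem contraction {a : ℤ} {x y x1 y1 x2 y2 : ℝ} {b : ℤ} (hx : x = a + 1 / x1)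
    (hy : y = a + 1 / y1) (hx1 : x1 = b + 1 / x2) (hy1 : y1 = b + 1 / y2) (hb : 1 ≤ b)
    (h2 : 1 < x2) (h3 : 1 < y2) : |x - y| ≤ |x2 - y2| / 4 := by
  have hb' : (1 : ℝ) ≤ b := by exact_mod_cast hb
  have e1 : x1 * x2 = b * x2 + 1 := by rw [hx1]; field_simp
  have e2 : y1 * y2 = b * y2 + 1 := by rw [hy1]; field_simp
  have p1 : 0 < 1 / x2 := by positivity
  have p2 : 0 < 1 / y2 := by positivity
  have q1 : 0 < x1 := by linarith
  have q2 : 0 < y1 := by linarith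
  have g1 : 2 ≤ x1 * x2 := by nlinarith
  have g2 : 2 ≤ y1 * y2 := by nlinarith
  have key : x - y = (x2 - y2) / ((x1 * x2) * (y1 * y2)) := by
    have : x - y = (y1 - x1) / (x1 * y1) := by rw [hx, hy]; field_simp; ring
    rw [this]
    have : y1 - x1 = (x2 - y2) / (x2 * y2) := by rw [hx1, hy1]; field_simp; ring
    rw [this]; field_simp
  have g3 : (4 : ℝ) ≤ (x1 * x2) * (y1 * y2) := by nlinarith
  rw [key, abs_div, abs_of_pos (show (0:ℝ) < (x1 * x2) * (y1 * y2) by linarith)]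
  exact div_le_div_of_nonneg_left (abs_nonneg _) (by norm_num) g3

theorem uniq_aux (k : ℕ) : ∀ x y : ℝ, Irrational x → Irrational y →
    (∀ n, cfTerm x n = cfTerm y n) → |x - y| ≤ (1 / 4) ^ k := by
  induction k with
  | zero =>
    intro x y _ _ h
    have := h 0
    simp only [pow_zero]
    exact (Int.abs_sub_lt_one_of_floor_eq_floor this).le
  | succ k ih =>
    intro x y hx hy h
    have i2 := ih (gaussIter x 2) (gaussIter y 2) (gi_irr hx 2) (gi_irr hy 2)
      (fun n => by rw [cf_shift, cf_shift, h])
    have r1 := gi_recover hx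
    have r2 := gi_recover hy
    have r3 := gi_recover (gi_irr hx 1)
    have r4 := gi_recover (gi_irr hy 1)
    rw [← gi_add] at r3 r4
    have h0 : ⌊x⌋ = ⌊y⌋ := h 0
    have h1 : ⌊gaussIter x 1⌋ = ⌊gaussIter y 1⌋ := h 1
    rw [← h0] at r2
    rw [← h1] at r4
    have hb : 1 ≤ ⌊gaussIter x 1⌋ := by
      rw [Int.le_floor]; exact_mod_cast (gi_gt_one hx 0).le
    have := contraction r1 r2 r3 r4 hb (gi_gt_one hx 1) (gi_gt_one hy 1)
    rw [pow_succ]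
    norm_num at this i2 ⊢
    linarith

theorem cf_inj {x y : ℝ} (hx : Irrational x) (hy : Irrational y)
    (h : ∀ n, cfTerm x n = cfTerm y n) : x = y := by
  have h1 : |x - y| ≤ 0 := by
    refine ge_of_tendsto' (tendsto_pow_atTop_nhds_zero_of_lt_one (r := (1/4 : ℝ))
      (by norm_num) (by norm_num)) (fun k => uniq_aux k x y hx hy h)
  have := abs_nonpos_iff.mp h1
  linarith

/-! ### Tail equivalence with parity -/

def TailRel (x y : ℝ) (e : ℕ) : Prop :=
  ∃ r t : ℕ, gaussIter x r = gaussIter y t ∧ Even (r + t + e)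

theorem TailRel.refl (x : ℝ) : TailRel x x 0 := ⟨0, 0, rfl, by simp⟩

theorem TailRel.symm {x y : ℝ} {e : ℕ} (h : TailRel x y e) : TailRel y x e := by
  obtain ⟨r, t, h, he⟩ := h
  exact ⟨t, r, h.symm, by rwa [Nat.add_comm t r]⟩

theorem TailRel.trans {x y z : ℝ} {e e' : ℕ} (h : TailRel x y e) (h' : TailRel y z e') :
    TailRel x z (e + e') := by
  obtain ⟨r, t, h, he⟩ := h
  obtain ⟨t', u, h', he'⟩ := h'
  refine ⟨r + t', u + t, ?_, by grind⟩
  rw [gi_add, h, ← gi_add, Nat.add_comm t t', gi_add, h', ← gi_add]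

theorem TailRel.mono {x y : ℝ} {e e' : ℕ} (h : TailRel x y e) (he : Even (e + e')) :
    TailRel x y e' := by
  obtain ⟨r, t, h, h'⟩ := h
  exact ⟨r, t, h, by grind⟩

theorem TailRel.iter (x : ℝ) (n : ℕ) : TailRel x (gaussIter x n) n :=
  ⟨n, 0, rfl, by grind⟩

theorem tail_add_int (x : ℝ) (q : ℤ) : TailRel x (x + q) 0 := by
  refine ⟨1, 1, ?_, by decide⟩
  rw [gi_one, gi_one, Int.floor_add_intCast]; push_cast; congr 1; ring

theorem tail_inv_pos_aux {x : ℝ} (hx : 1 < x) : TailRel x (1 / x) 1 := by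
  refine ⟨0, 1, ?_, by decide⟩
  have := (gi_of_eq (x := 1 / x) (a := 0) hx (by simp)).2
  rw [this, gi_zero]

theorem tail_inv_pos {x : ℝ} (hx : Irrational x) (h0 : 0 < x) : TailRel x (1 / x) 1 := by
  rcases lt_trichotomy x 1 with h | h | h
  · have h1 : 1 < 1 / x := by rw [lt_div_iff₀ h0]; linarith
    have := tail_inv_pos_aux h1
    rw [one_div_one_div] at this
    exact this.symm
  · exact absurd h (by simpa using hx.ne_int 1)
  · exact tail_inv_pos_aux h

theorem tail_one_sub_aux {x : ℝ} (h0 : 0 < x) (h1 : x < 1 / 2) :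
    TailRel x (1 - x) 1 := by
  have hz : 2 < 1 / x := by rw [lt_div_iff₀ h0]; linarith
  have a1 := (gi_of_eq (x := x) (y := 1 / x) (a := 0) (by linarith) (by simp)).2
  have a2 := (gi_of_eq (x := 1 - x) (y := 1 / (1 - x)) (a := 0)
    (by rw [lt_div_iff₀ (by linarith)]; linarith) (by simp)).2
  have a3 := (gi_of_eq (x := 1 / (1 - x)) (y := 1 / x - 1) (a := 1) (by linarith)
    (by
      have : 1 - x ≠ 0 := by linarith
      have : 1 / x - 1 ≠ 0 := by linarith
      field_simp
      push_cast
      ring)).2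
  have b1 : TailRel x (1 / x) 1 := a1 ▸ TailRel.iter x 1
  have b2 : TailRel (1 - x) (1 / (1 - x)) 1 := by
    have := TailRel.iter (1 - x) 1
    rwa [a2] at this
  have b3 : TailRel (1 / (1 - x)) (1 / x - 1) 1 := by
    have := TailRel.iter (1 / (1 - x)) 1
    rwa [a3] at this
  have b4 : TailRel (1 / x) (1 / x - 1) 0 := by
    have := tail_add_int (1 / x) (-1)
    push_cast at this
    rwa [← sub_eq_add_neg] at this
  exact (b1.trans (b4.trans (b3.symm.trans b2.symm))).mono (by decide)

theorem tail_neg {x : ℝ} (hx : Irrational x) : TailRel x (-x) 1 := by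
  have key : ∀ z : ℝ, Irrational z → 0 < z → z < 1 → TailRel z (1 - z) 1 := by
    intro z hz h0 h1
    rcases lt_trichotomy z (1 / 2) with h | h | h
    · exact tail_one_sub_aux h0 h
    · exact absurd h (by simpa using hz.ne_rat (1 / 2))
    · have := tail_one_sub_aux (x := 1 - z) (by linarith) (by linarith)
      rw [sub_sub_cancel] at this
      exact this.symm
  have h1 := key (x - ⌊x⌋) (hx.sub_intCast _) (fract_pos hx) (by
    have := Int.lt_floor_add_one x
    linarith)
  have h2 := tail_add_int x (-⌊x⌋)
  have h3 := tail_add_int (-x) (1 + ⌊x⌋)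
  push_cast at h2 h3
  rw [← sub_eq_add_neg] at h2
  rw [show -x + (1 + (⌊x⌋ : ℝ)) = 1 - (x - ⌊x⌋) by ring] at h3
  exact ((h2.trans h1).trans h3.symm).mono (by decide)

theorem tail_inv {x : ℝ} (hx : Irrational x) : TailRel x (1 / x) 1 := by
  rcases lt_trichotomy x 0 with h | h | h
  · have h1 := tail_neg hx
    have h2 := tail_inv_pos hx.neg (by linarith)
    have h3 := tail_neg (irr_one_div hx.neg)
    rw [show -(1 / -x) = 1 / x by rw [one_div_neg_eq_neg_one_div, neg_neg]] at h3
    exact ((h1.trans h2).trans h3).mono (by decide)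
  · exact absurd h hx.ne_zero
  · exact tail_inv_pos hx h

/-! ### Unimodular equivalence -/

def UniRel (x y : ℝ) (e : ℤ) : Prop :=
  ∃ a b c d : ℤ, a * d - b * c = e ∧ x * (c * y + d) = a * y + b

theorem lin_ne {y : ℝ} (hy : Irrational y) {c d : ℤ} (h : c ≠ 0 ∨ d ≠ 0) :
    (c : ℝ) * y + d ≠ 0 := by
  intro h0
  by_cases hc : c = 0
  · subst hc
    simp at h0
    simp_all
  · exact ((hy.intCast_mul hc).add_intCast d).ne_zero h0

theorem UniRel.symm {x y : ℝ} {e : ℤ} (h : UniRel x y e) : UniRel y x e := by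
  obtain ⟨a, b, c, d, h1, h2⟩ := h
  refine ⟨-d, b, c, -a, by linarith, ?_⟩
  push_cast; linarith

theorem UniRel.trans {x y z : ℝ} {e e' : ℤ} (h : UniRel x y e) (h' : UniRel y z e') : UniRel x z (e * e') := by
  obtain ⟨a, b, c, d, h1, h2⟩ := h
  obtain ⟨a', b', c', d', h1', h2'⟩ := h'
  refine ⟨a * a' + b * c', a * b' + b * d', c * a' + d * c', c * b' + d * d',
    by rw [← h1, ← h1']; ring, ?_⟩
  push_cast
  linear_combination (c' * z + d') * h2 + (a - x * c) * h2'

theorem uni_step {x : ℝ} (hx : Irrational x) : UniRel x (gaussIter x 1) (-1) := by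
  refine ⟨⌊x⌋, 1, 1, 0, by ring, ?_⟩
  have h := gi_recover hx
  have : 1 < gaussIter x 1 := gi_gt_one hx 0
  have h2 : gaussIter x 1 ≠ 0 := by linarith
  generalize gaussIter x 1 = y at *
  field_simp at h
  push_cast
  linarith

theorem uni_iter {x : ℝ} (hx : Irrational x) (n : ℕ) : UniRel x (gaussIter x n) ((-1) ^ n) := by
  induction n with
  | zero => exact ⟨1, 0, 0, 1, by simp, by simp [gi_zero]⟩
  | succ n ih =>
    have h := uni_step (gi_irr hx n)
    rw [← gi_add] at h
    rw [pow_succ]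
    exact UniRel.trans ih h

theorem uni_of_tail {x y : ℝ} {e : ℕ} (hx : Irrational x) (hy : Irrational y)
    (h : TailRel x y e) : UniRel x y ((-1) ^ e) := by
  obtain ⟨r, t, h, he⟩ := h
  have h1 := uni_iter hx r
  have h2 := uni_iter hy t
  rw [h] at h1
  have h3 := UniRel.trans h1 h2.symm
  rw [← pow_add] at h3
  have : (-1 : ℤ) ^ (r + t) = (-1) ^ e := by
    rcases Nat.even_or_odd (r + t) with h | h
    · rw [h.neg_one_pow, Even.neg_one_pow (by grind)]
    · rw [h.neg_one_pow, Odd.neg_one_pow (by grind)]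
  rwa [← this]

theorem tail_of_uni_aux (N : ℕ) : ∀ (a b c d : ℤ) (e : ℕ) (x y : ℝ), c.natAbs ≤ N →
    Irrational x → Irrational y → a * d - b * c = (-1) ^ e → x * (c * y + d) = a * y + b →
    TailRel x y e := by
  induction N with
  | zero =>
    intro a b c d e x y hc hx hy hdet h
    have hc : c = 0 := by omega
    subst hc
    simp only [mul_zero, sub_zero, Int.cast_zero, zero_mul, zero_add] at hdet h
    have hu : IsUnit d := by
      have : IsUnit (a * d) := by rw [hdet]; exact (isUnit_neg_one).pow e
      exact isUnit_of_mul_isUnit_right this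
    have hu' : IsUnit a := by
      have : IsUnit (a * d) := by rw [hdet]; exact (isUnit_neg_one).pow e
      exact isUnit_of_mul_isUnit_left this
    have he : Even e ∧ a * d = 1 ∨ Odd e ∧ a * d = -1 := by
      rcases Nat.even_or_odd e with h | h
      · left; exact ⟨h, by rw [hdet, h.neg_one_pow]⟩
      · right; exact ⟨h, by rw [hdet, h.neg_one_pow]⟩
    have hd2 : d * d = 1 := by
      rcases Int.isUnit_iff.mp hu with h | h <;> subst h <;> norm_num
    have hd2' : (d : ℝ) * d = 1 := by exact_mod_cast hd2
    have hx' : x = (a * d : ℤ) * y + (b * d : ℤ) := by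
      push_cast
      linear_combination d * h - x * hd2'
    rcases he with ⟨he, h1⟩ | ⟨he, h1⟩
    · rw [h1] at hx'
      have := tail_add_int y (b * d)
      rw [show y + (b * d : ℤ) = x by rw [hx']; push_cast; ring] at this
      exact this.symm.mono (by grind)
    · rw [h1] at hx'
      have := tail_add_int (-y) (b * d)
      rw [show -y + (b * d : ℤ) = x by rw [hx']; push_cast; ring] at this
      exact ((tail_neg hy).trans this).symm.mono (by grind)
  | succ N ih =>
    intro a b c d e x y hc hx hy hdet h
    by_cases hc0 : c = 0
    · exact ih a b c d e x y (by simp [hc0]) hx hy hdet h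
    have hlt : (a % c).natAbs < c.natAbs := by
      have h1 := Int.emod_nonneg a hc0
      have h2 := Int.emod_lt_abs a hc0
      rw [Int.abs_eq_natAbs] at h2
      omega
    set q := a / c with hq
    have ha : a % c = a - c * q := by have := Int.emod_add_mul_ediv a c; linarith
    have hirr : Irrational (x - q) := hx.sub_intCast q
    have hne := hirr.ne_zero
    have h3 := ih c d (a % c) (b - q * d) (e + 1) (1 / (x - q)) y (by omega)
      (irr_one_div hirr) hy
      (by rw [ha, pow_succ, ← hdet]; ring)
      (by
        rw [ha]
        field_simp
        push_cast
        linear_combination -h)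
    have h4 := tail_inv hirr
    have h5 := tail_add_int x (-q)
    push_cast at h5
    rw [← sub_eq_add_neg] at h5
    exact ((h5.trans h4).trans h3).mono ⟨e + 1, by ring⟩

theorem tail_iff_uni {x y : ℝ} {e : ℕ} (hx : Irrational x) (hy : Irrational y) :
    TailRel x y e ↔ UniRel x y ((-1) ^ e) :=
  ⟨uni_of_tail hx hy, fun ⟨a, b, c, d, h1, h2⟩ =>
    tail_of_uni_aux c.natAbs a b c d e x y le_rfl hx hy h1 h2⟩

/-! ### Forms and their roots -/

theorem irr_sqrt_disc {D : ℤ} (h0 : 0 < D) (h : ¬ IsSquare D) : Irrational (Real.sqrt (D : ℝ)) := by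
  rw [irrational_sqrt_intCast_iff]
  exact ⟨h, h0.le⟩

theorem coeff_ne {m n k : ℤ} (h : ¬ IsSquare (formDisc (m, n, k))) : m ≠ 0 ∧ n ≠ 0 := by
  constructor <;> rintro rfl <;> exact h ⟨k, by simp [formDisc]; ring⟩

theorem xiPlus_lin {m n k : ℤ} (hm : m ≠ 0) :
    2 * (m : ℝ) * xiPlus (m, n, k) + k = Real.sqrt ((formDisc (m, n, k) : ℤ) : ℝ) := by
  have : (m : ℝ) ≠ 0 := by exact_mod_cast hm
  simp only [xiPlus]
  field_simp
  ring

theorem root_of_lin {m n k : ℤ} {z s : ℝ} (hm : m ≠ 0) (hs : s ^ 2 = (formDisc (m, n, k) : ℤ))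
    (h : 2 * (m : ℝ) * z + k = s) : m * z ^ 2 + k * z + n = 0 := by
  have hm' : (4 * m : ℝ) ≠ 0 := by
    have : (m : ℝ) ≠ 0 := by exact_mod_cast hm
    simpa using this
  apply mul_left_cancel₀ hm'
  simp only [formDisc] at hs
  push_cast at hs
  linear_combination (2 * m * z + k + s) * h + hs

theorem xi_irr {m n k : ℤ} (h0 : 0 < formDisc (m, n, k)) (h : ¬ IsSquare (formDisc (m, n, k))) :
    Irrational (xiPlus (m, n, k)) := by
  have hm := (coeff_ne h).1
  have h1 := irr_sqrt_disc h0 h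
  rw [← xiPlus_lin hm] at h1
  intro ⟨q, hq⟩
  apply h1
  exact ⟨2 * m * q + k, by rw [← hq]; push_cast; ring⟩

theorem sl_iff {m n k m' n' k' : ℤ} (h0 : 0 < formDisc (m, n, k))
    (hsq : ¬ IsSquare (formDisc (m, n, k)))
    (hd : formDisc (m', n', k') = formDisc (m, n, k)) :
    SLEquiv (m, n, k) (m', n', k') ↔
      UniRel (xiPlus (m, n, k)) (xiPlus (m', n', k')) 1 := by
  have hm := (coeff_ne hsq).1
  have hm' := (coeff_ne (hd ▸ hsq)).1
  have hirr := xi_irr h0 hsq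
  have hirr' : Irrational (xiPlus (m', n', k')) := xi_irr (hd ▸ h0) (hd ▸ hsq)
  have l1 := xiPlus_lin (n := n) (k := k) hm
  have l2 := xiPlus_lin (n := n') (k := k') hm'
  rw [hd] at l2
  have hs : (Real.sqrt ((formDisc (m, n, k) : ℤ) : ℝ)) ^ 2 = (formDisc (m, n, k) : ℤ) :=
    Real.sq_sqrt (by exact_mod_cast h0.le)
  have r1 := root_of_lin hm hs l1
  have r2 := root_of_lin hm' (hs.trans (by rw [hd])) l2
  generalize xiPlus (m, n, k) = w at *
  generalize xiPlus (m', n', k') = z at *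
  generalize Real.sqrt ((formDisc (m, n, k) : ℤ) : ℝ) = s at *
  constructor
  · rintro ⟨a, b, c, d, hdet, h⟩
    refine ⟨a, b, c, d, hdet, ?_⟩
    have e1 := h 1 0
    have e2 := h 0 1
    have e3 := h 1 1
    simp only [qval] at e1 e2 e3
    have f1 : m' = m * a ^ 2 + n * c ^ 2 + k * a * c := by linarith
    have f2 : n' = m * b ^ 2 + n * d ^ 2 + k * b * d := by linarith
    have f3 : k' = 2 * m * a * b + 2 * n * c * d + k * (a * d + b * c) := by linarith
    have hdet' : (a : ℝ) * d - b * c = 1 := by exact_mod_cast hdet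
    have hmr : (2 * m : ℝ) ≠ 0 := by
      have : (m : ℝ) ≠ 0 := by exact_mod_cast hm
      simpa using this
    apply mul_left_cancel₀ hmr
    subst f1 f2 f3
    push_cast at l2 r2
    have key : (c * z + d) * s = 2 * m * (a * z + b) + k * (c * z + d) := by
      rw [← l2]
      linear_combination 2 * c * r2 + (2 * m * (a * z + b) + k * (c * z + d)) * hdet'
    linear_combination (c * z + d) * l1 + key
  · rintro ⟨a, b, c, d, hdet, h⟩
    have hdet' : (a : ℝ) * d - b * c = 1 := by exact_mod_cast hdet
    have hl : (c : ℝ) * z + d ≠ 0 := by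
      apply lin_ne hirr'
      by_contra hcon
      push Not at hcon
      rw [hcon.1, hcon.2] at hdet
      simp at hdet
    obtain ⟨M, hM⟩ : ∃ M : ℤ, M = m * a ^ 2 + n * c ^ 2 + k * a * c := ⟨_, rfl⟩
    obtain ⟨R, hR⟩ : ∃ R : ℤ, R = m * b ^ 2 + n * d ^ 2 + k * b * d := ⟨_, rfl⟩
    obtain ⟨K, hK⟩ : ∃ K : ℤ, K = 2 * m * a * b + 2 * n * c * d + k * (a * d + b * c) :=
      ⟨_, rfl⟩
    have hMr : (M : ℝ) = m * a ^ 2 + n * c ^ 2 + k * a * c := by rw [hM]; push_cast; ring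
    have hRr : (R : ℝ) = m * b ^ 2 + n * d ^ 2 + k * b * d := by rw [hR]; push_cast; ring
    have hKr : (K : ℝ) = 2 * m * a * b + 2 * n * c * d + k * (a * d + b * c) := by
      rw [hK]; push_cast; ring
    have g0 : M * z ^ 2 + K * z + R = 0 := by
      have : M * z ^ 2 + K * z + R = (c * z + d) ^ 2 * (m * w ^ 2 + k * w + n) := by
        have : (c * z + d) ^ 2 * (m * w ^ 2 + k * w + n) =
          m * (w * (c * z + d)) ^ 2 + k * (w * (c * z + d)) * (c * z + d) + n * (c * z + d) ^ 2 := by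
          ring
        rw [this, h, hMr, hRr, hKr]; ring
      rw [this, r1, mul_zero]
    have key : 2 * M * z + K = s := by
      apply mul_left_cancel₀ hl
      rw [← l1]
      have : (c * z + d) * (2 * M * z + K) = 2 * m * (a * z + b) + k * (c * z + d) := by
        have : (c * z + d) * (2 * M * z + K) = 2 * c * (M * z ^ 2 + K * z + R) +
          (a * d - b * c) * (2 * m * (a * z + b) + k * (c * z + d)) := by
          rw [hMr, hRr, hKr]; ring
        rw [this, g0, hdet']; ring
      rw [this, ← h]; ring
    have eM : M = m' := by
      by_contra hne
      have : ((2 * (M - m') : ℤ) : ℝ) * z + ((K - k' : ℤ) : ℝ) = 0 := by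
        push_cast; linarith
      exact lin_ne hirr' (Or.inl (by omega)) this
    have eK : K = k' := by
      have : (K : ℝ) = k' := by rw [eM] at key; linarith
      exact_mod_cast this
    have eR : R = n' := by
      have d1 : K ^ 2 - 4 * M * R = k ^ 2 - 4 * m * n := by
        have : K ^ 2 - 4 * M * R = (a * d - b * c) ^ 2 * (k ^ 2 - 4 * m * n) := by
          rw [hM, hR, hK]; ring
        rw [this, hdet]; ring
      simp only [formDisc] at hd
      rw [eM, eK] at d1
      have : 4 * m' * R = 4 * m' * n' := by linarith
      exact mul_left_cancel₀ (by omega) this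
    refine ⟨a, b, c, d, hdet, fun x y => ?_⟩
    simp only [qval]
    rw [← eM, ← eK, ← eR, hM, hR, hK]
    ring

/-! ### Conjugates along the continued fraction -/

def QConj (x y : ℝ) : Prop :=
  Irrational x ∧ x ≠ y ∧ ∃ S T : ℚ, x + y = S ∧ x * y = T

theorem QConj.right_irr {x y : ℝ} (h : QConj x y) : Irrational y := by
  obtain ⟨hx, _, S, T, hS, _⟩ := h
  rw [show y = S - x by linarith]
  exact hx.ratCast_sub S

theorem QConj.unique {x y y' : ℝ} (h : QConj x y) (h' : QConj x y') : y = y' := by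
  obtain ⟨hx, _, S, T, hS, hT⟩ := h
  obtain ⟨_, _, S', T', hS', hT'⟩ := h'
  by_contra hne
  apply hx
  refine ⟨(T - T') / (S - S'), ?_⟩
  push_cast
  have : y - y' ≠ 0 := sub_ne_zero.mpr hne
  rw [← hS, ← hS', ← hT, ← hT', div_eq_iff (by simpa using this)]
  ring

theorem QConj.step {x y : ℝ} (h : QConj x y) (a : ℤ) :
    QConj (1 / (x - a)) (1 / (y - a)) := by
  have hy := h.right_irr
  obtain ⟨hx, hne, S, T, hS, hT⟩ := h
  have h1 : x - a ≠ 0 := (hx.sub_intCast a).ne_zero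
  have h2 : y - a ≠ 0 := (hy.sub_intCast a).ne_zero
  refine ⟨irr_one_div (hx.sub_intCast a), ?_, (S - 2 * a) / (T - a * S + a ^ 2),
    1 / (T - a * S + a ^ 2), ?_, ?_⟩
  · intro hh
    rw [one_div, one_div] at hh
    have := inv_injective hh
    exact hne (by linarith)
  · push_cast
    rw [← hS, ← hT, show x * y - a * (x + y) + (a : ℝ) ^ 2 = (x - a) * (y - a) by ring]
    field_simp
    ring
  · push_cast
    rw [← hS, ← hT, show x * y - a * (x + y) + (a : ℝ) ^ 2 = (x - a) * (y - a) by ring]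
    field_simp

/-- Apply to `y` the Moebius maps of the continued fraction of `x`. -/
noncomputable def comp (x y : ℝ) : ℕ → ℝ
  | 0 => y
  | n + 1 => 1 / (comp x y n - (⌊gaussIter x n⌋ : ℝ))

theorem comp_succ (x y : ℝ) (n : ℕ) :
    comp x y (n + 1) = 1 / (comp x y n - (⌊gaussIter x n⌋ : ℝ)) := rfl

theorem comp_conj {x y : ℝ} (h : QConj x y) (n : ℕ) :
    QConj (gaussIter x n) (comp x y n) := by
  induction n with
  | zero => exact h
  | succ n ih => exact ih.step _

theorem tail_comp {x y : ℝ} (h : QConj x y) (n : ℕ) : TailRel y (comp x y n) n := by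
  induction n with
  | zero => exact TailRel.refl y
  | succ n ih =>
    have hi := (comp_conj h n).right_irr
    have h1 := tail_add_int (comp x y n) (-⌊gaussIter x n⌋)
    push_cast at h1
    rw [← sub_eq_add_neg] at h1
    exact (ih.trans h1).trans (tail_inv (hi.sub_intCast _))

theorem term_pos {x : ℝ} (hx : Irrational x) {n : ℕ} (hn : 1 ≤ n) :
    (1 : ℝ) ≤ (⌊gaussIter x n⌋ : ℝ) := by
  have : (1 : ℤ) ≤ ⌊gaussIter x n⌋ := by
    rw [Int.le_floor]
    obtain ⟨k, rfl⟩ := Nat.exists_eq_add_of_le' hn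
    exact_mod_cast (gi_gt_one hx k).le
  exact_mod_cast this

theorem comp_recover {x y : ℝ} (h : QConj x y) (n : ℕ) :
    comp x y n = (⌊gaussIter x n⌋ : ℝ) + 1 / comp x y (n + 1) := by
  rw [comp_succ, one_div_one_div]; ring

theorem exists_neg {x y : ℝ} (h : QConj x y) : ∃ n, 1 ≤ n ∧ comp x y n < 0 := by
  by_contra hcon
  push Not at hcon
  have hpos : ∀ n, 1 ≤ n → 0 < comp x y n := fun n hn =>
    lt_of_le_of_ne (hcon n hn) (comp_conj h n).right_irr.ne_zero.symm
  have hgt : ∀ n, 1 ≤ n → 1 < comp x y n := by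
    intro n hn
    rw [comp_recover h n]
    have := one_div_pos.mpr (hpos (n + 1) (by omega))
    have := term_pos h.1 hn
    linarith
  have hst : ∀ n, 1 ≤ n → ⌊comp x y n⌋ = ⌊gaussIter x n⌋ ∧
      gaussIter (comp x y n) 1 = comp x y (n + 1) := fun n hn =>
    gi_of_eq (hgt (n + 1) (by omega)) (comp_recover h n)
  have hit : ∀ j, gaussIter (comp x y 1) j = comp x y (1 + j) := by
    intro j
    induction j with
    | zero => rfl
    | succ j ih =>
      rw [gi_add, ih, (hst (1 + j) (by omega)).2, Nat.add_assoc]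
  have := cf_inj (comp_conj h 1).right_irr (gi_irr h.1 1) (fun j => by
    rw [cf_shift]
    unfold cfTerm
    rw [hit, (hst (1 + j) (by omega)).1])
  exact (comp_conj h 1).2.1 this.symm

theorem exists_reduced {x y : ℝ} (h : QConj x y) :
    ∃ N0, ∀ n, N0 ≤ n → 1 ≤ n ∧ -1 < comp x y n ∧ comp x y n < 0 := by
  obtain ⟨n, hn, hneg⟩ := exists_neg h
  have step : ∀ k, 1 ≤ k → comp x y k < 0 → -1 < comp x y (k + 1) ∧ comp x y (k + 1) < 0 := by
    intro k hk hk'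
    have := term_pos h.1 hk
    rw [comp_succ]
    constructor
    · rw [lt_div_iff_of_neg (by linarith)]; linarith
    · exact one_div_neg.mpr (by linarith)
  have all : ∀ j, comp x y (n + j) < 0 := by
    intro j
    induction j with
    | zero => exact hneg
    | succ j ih => exact (step (n + j) (by omega) ih).2
  refine ⟨n + 1, fun k hk => ?_⟩
  obtain ⟨j, rfl⟩ := Nat.exists_eq_add_of_le hk
  refine ⟨by omega, ?_⟩
  have := step (n + j) (by omega) (all j)
  rwa [show n + 1 + j = n + j + 1 by omega]

theorem eta_step {x y : ℝ} (h : QConj x y) {n : ℕ}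
    (hr : -1 < comp x y n ∧ comp x y n < 0) :
    ⌊-1 / comp x y (n + 1)⌋ = ⌊gaussIter x n⌋ ∧
      gaussIter (-1 / comp x y (n + 1)) 1 = -1 / comp x y n := by
  have hne : comp x y n ≠ 0 := by linarith
  apply gi_of_eq
  · rw [lt_div_iff_of_neg hr.2]; linarith
  · rw [comp_succ]
    rw [neg_div, one_div_one_div]
    field_simp
    ring

theorem eta_iter {x y : ℝ} (h : QConj x y) {N0 : ℕ}
    (hr : ∀ n, N0 ≤ n → 1 ≤ n ∧ -1 < comp x y n ∧ comp x y n < 0) (j : ℕ) :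
    ∀ n, N0 ≤ n → gaussIter (-1 / comp x y (n + j)) j = -1 / comp x y n := by
  induction j with
  | zero => intro n _; rfl
  | succ j ih =>
    intro n hn
    rw [Nat.add_comm j 1, gi_add, show n + (1 + j) = (n + j) + 1 by omega,
      (eta_step h (hr (n + j) (by omega)).2).2, ih n hn]

theorem eta_term {x y : ℝ} (h : QConj x y) {N0 : ℕ}
    (hr : ∀ n, N0 ≤ n → 1 ≤ n ∧ -1 < comp x y n ∧ comp x y n < 0) (j n : ℕ) (hn : N0 ≤ n) :
    cfTerm (-1 / comp x y (n + 1 + j)) j = cfTerm x n := by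
  unfold cfTerm
  rw [eta_iter h hr j (n + 1) (by omega), (eta_step h (hr n hn).2).1]

theorem gi_periodic {x : ℝ} (hx : Irrational x) {N P : ℕ}
    (hp : ∀ j, cfTerm x (N + j + P) = cfTerm x (N + j)) {n : ℕ} (hn : N ≤ n) :
    gaussIter x (n + P) = gaussIter x n := by
  apply cf_inj (gi_irr hx _) (gi_irr hx _)
  intro j
  rw [cf_shift, cf_shift]
  have := hp (n - N + j)
  rwa [show N + (n - N + j) + P = n + P + j by omega, show N + (n - N + j) = n + j by omega] at this

theorem comp_periodic {x y : ℝ} (h : QConj x y) {N P : ℕ}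
    (hp : ∀ j, cfTerm x (N + j + P) = cfTerm x (N + j)) {n : ℕ} (hn : N ≤ n) (K : ℕ) :
    comp x y (n + P * K) = comp x y n := by
  induction K with
  | zero => rfl
  | succ K ih =>
    rw [← ih]
    have h1 := comp_conj h (n + P * (K + 1))
    have h2 := comp_conj h (n + P * K)
    rw [show n + P * (K + 1) = n + P * K + P by ring] at h1 ⊢
    rw [gi_periodic h.1 hp (by omega)] at h1
    exact h1.unique h2

/-! ### Cyclic words -/

theorem rotated_of_seq {s t : List ℤ} (hl : t.length = s.length) (r q : ℕ)
    (h : ∀ j, s.getD ((r + j) % s.length) 0 = t.getD ((q + j) % t.length) 0) :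
    s ~r t := by
  have key : s.rotate r = t.rotate q := by
    apply List.ext_getElem (by simp [hl])
    intro i h1 h2
    have hs : 0 < s.length := by simp at h1; omega
    have ht : 0 < t.length := by omega
    have := h i
    rw [List.getD_eq_getElem _ _ (Nat.mod_lt _ hs), List.getD_eq_getElem _ _ (Nat.mod_lt _ ht)]
      at this
    rw [List.getElem_rotate, List.getElem_rotate]
    simpa only [Nat.add_comm] using this
  have a : s ~r s.rotate r := ⟨r, rfl⟩
  have b : t ~r t.rotate q := ⟨q, rfl⟩
  rw [key] at a
  exact a.trans b.symm

theorem seq_of_rotated {s t : List ℤ} (hs : s ≠ []) (h : s ~r t) :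
    ∃ r, ∀ j, s.getD ((r + j) % s.length) 0 = t.getD (j % s.length) 0 := by
  obtain ⟨r, rfl⟩ := h
  refine ⟨r, fun j => ?_⟩
  have hs' : 0 < s.length := List.length_pos_iff.mpr hs
  rw [List.getD_eq_getElem _ _ (Nat.mod_lt _ hs'),
    List.getD_eq_getElem _ _ (by rw [List.length_rotate]; exact Nat.mod_lt _ hs'),
    List.getElem_rotate]
  congr 1
  rw [Nat.mod_add_mod, Nat.add_comm]

theorem half_pal {A : List ℤ} (h : A.reverse = A) (he : Even A.length) :
    ∃ B : List ℤ, A = B ++ B.reverse := by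
  obtain ⟨k, hk⟩ := he
  refine ⟨A.take k, ?_⟩
  have h1 : A.take k ++ A.drop k = A := List.take_append_drop k A
  have h2 : (A.drop k).reverse ++ (A.take k).reverse = A.take k ++ A.drop k := by
    rw [← List.reverse_append, h1, h]
  have h3 := List.append_inj h2 (by simp; omega)
  rw [h3.2, h1]

theorem pal_iff {s : List ℤ} (he : Even s.length) :
    (Palindromic s ∨ Bipalindromic s) ↔ s ~r s.reverse := by
  constructor
  · rintro (⟨t, h1, h2⟩ | ⟨u, v, h1, _, _, h2, h3⟩)
    · have := h1.reverse
      rw [h2] at this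
      exact h1.trans this.symm
    · have := h1.reverse
      rw [List.reverse_append, h2, h3] at this
      exact (h1.trans List.isRotated_append).trans this.symm
  · intro h
    obtain ⟨r, hr, h⟩ := List.isRotated_iff_mod.mp h
    rw [List.rotate_eq_drop_append_take hr] at h
    have h1 : s.take r ++ s.drop r = s := List.take_append_drop r s
    generalize s.take r = A at *
    generalize s.drop r = B at *
    subst h1
    rw [List.reverse_append] at h
    have h3 := List.append_inj h (by simp)
    rw [List.length_append] at he
    rcases Nat.even_or_odd A.length with hA | hA
    · left
      obtain ⟨A1, rfl⟩ := half_pal h3.2.symm hA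
      obtain ⟨B1, rfl⟩ := half_pal h3.1.symm (by grind)
      refine ⟨(A1.reverse ++ (B1 ++ B1.reverse)) ++ A1, ?_, by simp⟩
      rw [List.append_assoc]
      exact List.isRotated_append
    · right
      exact ⟨A, B, List.IsRotated.refl _, hA, by grind, h3.2.symm, h3.1.symm⟩

/-! ### Periods -/

theorem period_mul {s : List ℤ} {x : ℝ} {N : ℕ}
    (hc : ∀ j, cfTerm x (N + j) = s.getD (j % s.length) 0) (j : ℕ) :
    cfTerm x (N + j + s.length) = cfTerm x (N + j) := by
  rw [Nat.add_assoc, hc, hc, Nat.add_mod_right]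

theorem odd_iff {s : List ℤ} {x : ℝ} (hx : Irrational x) (h : IsCFPeriod s x) :
    Odd s.length ↔ TailRel x x 1 := by
  obtain ⟨hs, ⟨N, hc⟩, hmin⟩ := h
  have hP : 0 < s.length := List.length_pos_iff.mpr hs
  constructor
  · intro ho
    exact ⟨N + s.length, N, gi_periodic hx (period_mul hc) le_rfl, by
      obtain ⟨k, hk⟩ := ho
      exact ⟨N + k + 1, by omega⟩⟩
  · have key : ∀ r Q, gaussIter x (r + Q) = gaussIter x r → s.length ∣ Q := by
      intro r Q hQ
      by_contra hnd
      have hR : Q % s.length ≠ 0 := fun h0 => hnd (Nat.dvd_of_mod_eq_zero h0)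
      have hper : ∀ j, cfTerm x (r + j + Q) = cfTerm x (r + j) := by
        intro j
        rw [← cf_shift x r j, ← hQ, cf_shift]
        congr 1
        omega
      have := hmin (Q % s.length) (by omega) ⟨N + r, by omega, fun j => by
        have e1 := hper (N + j)
        have e2 : cfTerm x (N + r + j + Q % s.length) = cfTerm x (N + r + j + Q) := by
          rw [show N + r + j + Q % s.length = N + (r + j + Q % s.length) by omega,
            show N + r + j + Q = N + (r + j + Q) by omega, hc, hc, Nat.add_mod_mod]
        rw [e2, show N + r + j = r + (N + j) by omega, e1]⟩
      have := Nat.mod_lt Q hP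
      omega
    rintro ⟨r, t, hrt, he⟩
    rcases le_total r t with hle | hle
    · obtain ⟨Q, rfl⟩ := Nat.exists_eq_add_of_le hle
      have := key r Q hrt.symm
      exact Odd.of_dvd_nat (n := Q) (by grind) this
    · obtain ⟨Q, rfl⟩ := Nat.exists_eq_add_of_le hle
      have := key t Q hrt
      exact Odd.of_dvd_nat (n := Q) (by grind) this

theorem mod_flip {P j M : ℕ} (hP : 0 < P) (hj : j + 1 ≤ P * M) :
    (P * M - 1 - j) % P = P - 1 - j % P := by
  have h1 := Nat.mod_lt j hP
  have h2 := Nat.mod_add_div j P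
  have h3 : j / P < M := by
    rw [Nat.div_lt_iff_lt_mul hP]; rw [Nat.mul_comm]; omega
  obtain ⟨c, hc⟩ := Nat.exists_eq_add_of_lt h3
  have : P * M - 1 - j = (P - 1 - j % P) + P * c := by
    rw [hc]
    have : P * (j / P + c + 1) = P * (j / P) + P * c + P := by ring
    omega
  rw [this, Nat.add_mul_mod_self_left, Nat.mod_eq_of_lt (by omega)]

theorem rev_iff {s : List ℤ} {x y : ℝ} (h : QConj x y) (hs : s ≠ [])
    {N : ℕ} (hc : ∀ j, cfTerm x (N + j) = s.getD (j % s.length) 0) :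
    (∃ e, TailRel x y e) ↔ s ~r s.reverse := by
  have hP : 0 < s.length := List.length_pos_iff.mpr hs
  obtain ⟨N0, hr⟩ := exists_reduced h
  have hN0 : N0 ≤ s.length * N0 := Nat.le_mul_of_pos_left N0 hP
  obtain ⟨B, hB⟩ : ∃ B, B = N + s.length * N0 := ⟨_, rfl⟩
  have hyi := (comp_conj h B).right_irr
  obtain ⟨w, hw⟩ : ∃ w, w = -1 / comp x y B := ⟨_, rfl⟩
  have hwneg : w = -(1 / comp x y B) := by rw [hw, neg_div]
  have hwi : Irrational w := by rw [hwneg]; exact (irr_one_div hyi).neg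
  have hyw : TailRel y w (B + 1 + 1) := by
    have h1 := (tail_comp h B).trans (tail_inv hyi)
    have h2 := h1.trans (tail_neg (irr_one_div hyi))
    rwa [← hwneg] at h2
  have hwt : ∀ j, cfTerm w j = s.reverse.getD (j % s.length) 0 := by
    intro j
    have hPj : j + 1 ≤ s.length * (j + 1) := Nat.le_mul_of_pos_left _ hP
    obtain ⟨u, hu⟩ := Nat.exists_eq_add_of_le hPj
    have e1 : w = -1 / comp x y (B + u + 1 + j) := by
      rw [hw, ← comp_periodic h (period_mul hc) (n := B) (by omega) (j + 1), hu]
      congr 2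
      omega
    rw [e1, eta_term h hr j (B + u) (by omega), hB, Nat.add_assoc, hc]
    have e2 : u = s.length * (j + 1) - 1 - j := by omega
    have h1 := Nat.mod_lt j hP
    rw [Nat.mul_add_mod, e2, mod_flip hP hPj,
      List.getD_eq_getElem _ _ (by omega), List.getD_eq_getElem _ _ (by simpa using h1),
      List.getElem_reverse]
  have hxt : ∀ j, cfTerm (gaussIter x N) j = s.getD (j % s.length) 0 := fun j => by
    rw [cf_shift, hc]
  constructor
  · rintro ⟨e, he⟩
    obtain ⟨r, t, hrt, -⟩ := ((TailRel.iter x N).symm.trans he).trans hyw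
    apply rotated_of_seq (by simp) r t
    intro j
    rw [List.length_reverse, ← hxt, ← hwt, ← cf_shift, ← cf_shift, hrt]
  · intro hrot
    obtain ⟨r, hseq⟩ := seq_of_rotated hs hrot
    have : gaussIter (gaussIter x N) r = w := by
      apply cf_inj (gi_irr (gi_irr h.1 _) _) hwi
      intro j
      rw [cf_shift, hxt, hwt, hseq]
    rw [← gi_add] at this
    have h1 := TailRel.iter x (N + r)
    rw [this] at h1
    exact ⟨_, h1.trans hyw.symm⟩

/-! ### The three symmetric forms -/

theorem conj_pair {m n k : ℤ} (h0 : 0 < formDisc (m, n, k))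
    (hsq : ¬ IsSquare (formDisc (m, n, k))) :
    QConj (xiPlus (m, n, k)) (xiMinus (m, n, k)) := by
  have hm : (m : ℝ) ≠ 0 := by exact_mod_cast (coeff_ne hsq).1
  have hpos : 0 < Real.sqrt ((formDisc (m, n, k) : ℤ) : ℝ) :=
    Real.sqrt_pos.mpr (by exact_mod_cast h0)
  have hs : (Real.sqrt ((formDisc (m, n, k) : ℤ) : ℝ)) ^ 2 = (formDisc (m, n, k) : ℤ) :=
    Real.sq_sqrt (by exact_mod_cast h0.le)
  refine ⟨xi_irr h0 hsq, ?_, -k / m, n / m, ?_, ?_⟩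
  · intro h
    simp only [xiPlus, xiMinus] at h
    rw [div_left_inj' (by simpa using hm)] at h
    linarith
  · simp only [xiPlus, xiMinus]
    push_cast
    field_simp
    ring
  · have hs2 : (Real.sqrt ((formDisc (m, n, k) : ℤ) : ℝ)) ^ 2 = (k : ℝ) ^ 2 - 4 * m * n := by
      rw [hs]; simp [formDisc]
    simp only [xiPlus, xiMinus]
    generalize Real.sqrt ((formDisc (m, n, k) : ℤ) : ℝ) = S at *
    push_cast
    field_simp
    linear_combination -hs2

theorem sl_tail {m n k m' n' k' : ℤ} (h0 : 0 < formDisc (m, n, k))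
    (hsq : ¬ IsSquare (formDisc (m, n, k)))
    (hd : formDisc (m', n', k') = formDisc (m, n, k)) :
    SLEquiv (m, n, k) (m', n', k') ↔
      TailRel (xiPlus (m, n, k)) (xiPlus (m', n', k')) 0 := by
  rw [sl_iff h0 hsq hd,
    tail_iff_uni (xi_irr h0 hsq) (xi_irr (hd ▸ h0) (hd ▸ hsq)), pow_zero]

theorem conj_iff {m n k : ℤ} (h0 : 0 < formDisc (m, n, k))
    (hsq : ¬ IsSquare (formDisc (m, n, k))) :
    SLEquiv (m, n, k) (conjF (m, n, k)) ↔
      TailRel (xiPlus (m, n, k)) (xiMinus (m, n, k)) 1 := by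
  have hd : formDisc (m, n, -k) = formDisc (m, n, k) := by simp [formDisc]
  have hxi : xiPlus (m, n, -k) = -xiMinus (m, n, k) := by
    simp only [xiPlus, xiMinus]
    rw [hd]; push_cast; ring
  have hm := tail_neg (conj_pair h0 hsq).right_irr
  change SLEquiv (m, n, k) (m, n, -k) ↔ _
  rw [sl_tail h0 hsq hd, hxi]
  exact ⟨fun h => (h.trans hm.symm).mono (by decide), fun h => (h.trans hm).mono (by decide)⟩

theorem adj_iff {m n k : ℤ} (h0 : 0 < formDisc (m, n, k))
    (hsq : ¬ IsSquare (formDisc (m, n, k))) :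
    SLEquiv (m, n, k) (adjF (m, n, k)) ↔
      TailRel (xiPlus (m, n, k)) (xiMinus (m, n, k)) 0 := by
  have hd : formDisc (-n, -m, k) = formDisc (m, n, k) := by simp [formDisc]; ring
  have hirr := (conj_pair h0 hsq).right_irr
  have hm : (m : ℝ) ≠ 0 := by exact_mod_cast (coeff_ne hsq).1
  have hn : (n : ℝ) ≠ 0 := by exact_mod_cast (coeff_ne hsq).2
  have hxi : xiPlus (-n, -m, k) = -(1 / xiMinus (m, n, k)) := by
    have hs : (Real.sqrt ((formDisc (m, n, k) : ℤ) : ℝ)) ^ 2 = (formDisc (m, n, k) : ℤ) :=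
      Real.sq_sqrt (by exact_mod_cast h0.le)
    have hs2 : (Real.sqrt ((formDisc (m, n, k) : ℤ) : ℝ)) ^ 2 = (k : ℝ) ^ 2 - 4 * m * n := by
      rw [hs]; simp [formDisc]
    have hne := hirr.ne_zero
    rw [← neg_div, eq_div_iff hne]
    simp only [xiPlus, xiMinus]
    rw [hd]
    generalize Real.sqrt ((formDisc (m, n, k) : ℤ) : ℝ) = S at *
    push_cast
    field_simp
    linear_combination hs2
  have hm := (tail_inv hirr).trans (tail_neg (irr_one_div hirr))
  change SLEquiv (m, n, k) (-n, -m, k) ↔ _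
  rw [sl_tail h0 hsq hd, hxi]
  exact ⟨fun h => (h.trans hm.symm).mono (by decide), fun h => (h.trans hm).mono (by decide)⟩

theorem antip_iff {m n k : ℤ} (h0 : 0 < formDisc (m, n, k))
    (hsq : ¬ IsSquare (formDisc (m, n, k))) :
    SLEquiv (m, n, k) (antipF (m, n, k)) ↔
      TailRel (xiPlus (m, n, k)) (xiPlus (m, n, k)) 1 := by
  have hd : formDisc (-n, -m, -k) = formDisc (m, n, k) := by simp [formDisc]; ring
  have hirr := xi_irr h0 hsq
  have hm : (m : ℝ) ≠ 0 := by exact_mod_cast (coeff_ne hsq).1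
  have hn : (n : ℝ) ≠ 0 := by exact_mod_cast (coeff_ne hsq).2
  have hxi : xiPlus (-n, -m, -k) = 1 / xiPlus (m, n, k) := by
    have hs : (Real.sqrt ((formDisc (m, n, k) : ℤ) : ℝ)) ^ 2 = (formDisc (m, n, k) : ℤ) :=
      Real.sq_sqrt (by exact_mod_cast h0.le)
    have hs2 : (Real.sqrt ((formDisc (m, n, k) : ℤ) : ℝ)) ^ 2 = (k : ℝ) ^ 2 - 4 * m * n := by
      rw [hs]; simp [formDisc]
    have hne := hirr.ne_zero
    rw [eq_div_iff hne]
    simp only [xiPlus]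
    rw [hd]
    generalize Real.sqrt ((formDisc (m, n, k) : ℤ) : ℝ) = S at *
    push_cast
    field_simp
    linear_combination -hs2
  have hm := tail_inv hirr
  change SLEquiv (m, n, k) (-n, -m, -k) ↔ _
  rw [sl_tail h0 hsq hd, hxi]
  exact ⟨fun h => (h.trans hm.symm).mono (by decide), fun h => (h.trans hm).mono (by decide)⟩

/-- The period `Γ(m,n,k)` is even and neither palindromic nor bipalindromic iff the
class `C(m,n,k)` is asymmetric. -/
theorem statement8 (m n k : ℤ)
    (hpos : 0 < formDisc (m, n, k)) (hsq : ¬ IsSquare (formDisc (m, n, k))) :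
    ∀ s : List ℤ, IsCFPeriod s (xiPlus (m, n, k)) →
      ((Even s.length ∧ ¬ Palindromic s ∧ ¬ Bipalindromic s) ↔
        (¬ SLEquiv (m, n, k) (conjF (m, n, k)) ∧ ¬ SLEquiv (m, n, k) (adjF (m, n, k)) ∧
          ¬ SLEquiv (m, n, k) (antipF (m, n, k)))) := by
  intro s hp
  rw [conj_iff hpos hsq, adj_iff hpos hsq, antip_iff hpos hsq]
  have h1 := odd_iff (xi_irr hpos hsq) hp
  obtain ⟨hs, ⟨N, hc⟩, _⟩ := hp
  have h2 := rev_iff (conj_pair hpos hsq) hs hc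
  rw [← h1, Nat.not_odd_iff_even]
  constructor
  · rintro ⟨he, hnp, hnb⟩
    have h3 : ¬ s ~r s.reverse := fun h => by
      rcases (pal_iff he).mpr h with h | h
      · exact hnp h
      · exact hnb h
    exact ⟨fun h => h3 (h2.mp ⟨_, h⟩), fun h => h3 (h2.mp ⟨_, h⟩), he⟩
  · rintro ⟨hc1, hc0, he⟩
    have h3 : ¬ s ~r s.reverse := fun h => by
      obtain ⟨e, h⟩ := h2.mpr h
      rcases Nat.even_or_odd e with he | he
      · exact hc0 (h.mono (by simpa using he))
      · exact hc1 (h.mono he.add_one)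
    exact ⟨he, fun h => h3 ((pal_iff he).mp (Or.inl h)), fun h => h3 ((pal_iff he).mp (Or.inr h))⟩
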